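/- Let H_h ⊆ H and B_h ⊆ B be closed linear subspaces, T > 0, N ∈ ℕ with τ := T/N ≤ 1/4, tⁿ := nτ, and weights ωⁿ(t) := (6t − 2tⁿ − 4tⁿ⁻¹)/τ on [tⁿ⁻¹, tⁿ]. Let F: [0, T] → H' and G: [0, T] → B' be continuous, and let u: [0, T] → H be continuously differentiable with u(0) = 0 and φ: [0, T] → B continuous such that for every t ∈ [0, T]: ⟨u'(t), v⟩_L + d(u(t), v) − c(φ(t), v) = F(t)(v) for all v ∈ H and k(u(t), ψ) + b(φ(t), ψ) = G(t)(ψ) for all ψ ∈ B. Then the averaged implicit Euler scheme — find u⁰ = 0, uⁿ ∈ H_h, φⁿ ∈ B_h with ⟨(uⁿ − uⁿ⁻¹)/τ, v⟩_L + d(uⁿ, v) − c(φⁿ, v) = (1/τ)∫_{tⁿ⁻¹}^{tⁿ} F(t)(v) ωⁿ(t) dt for all v ∈ H_h and k(uⁿ, ψ) + b(φⁿ, ψ) = (1/τ)∫_{tⁿ⁻¹}^{tⁿ} G(t)(ψ) ωⁿ(t) dt for all ψ ∈ B_h, for n = 1, …, N — has a unique solution, and with u_{h,τ}: [0, T] →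 H_h the continuous piecewise linear function with u_{h,τ}(tⁿ) = uⁿ and φ_{h,τ} := φⁿ on (tⁿ⁻¹, tⁿ], there is a constant C > 0 depending only on α, C_V, C_k, C_tr, C_d, C_b, C_P, and T such that for every continuous, piecewise linear (with respect to the partition) ũ: [0, T] → H_h with ũ(0) = 0 and every φ̃: (0, T] → B_h that is constant on each (tⁿ⁻¹, tⁿ]: ∫₀ᵀ ‖u(t) − u_{h,τ}(t)‖_H² dt + Σ_{n=1}^{N} ∫_{tⁿ⁻¹}^{tⁿ} |u'(t) − (uⁿ − uⁿ⁻¹)/τ|_*² dt + ∫₀ᵀ ‖φ(t) − φ_{h,τ}(t)‖_B² dt ≤ C ( ∫₀ᵀ ‖u(t) − ũ(t)‖_H² dt + Σ_{n=1}^{N} ∫_{tⁿ⁻¹}^{tⁿ} |u'(t) − (ũ(tⁿ) − ũ(tⁿ⁻¹))/τ|_*² dt + ∫₀ᵀ ‖φ(t) − φ̃(t)‖_B² dt ). (This is the abstract form of Theorem 4.5, the paper's main result: quasi-optimality in the energy norm of the fully discrete non-symmetric coupling scheme.) -/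

import Mathlib

/-!
Solvability and uniqueness of each step follow from coercivity of the step's bilinear form: `τ⁻¹ ≥ 1`
turns the Gårding inequality into coercivity (`step_exists`, `step_energy`).

For quasi-optimality, the weight `ωⁿ` is chosen so that weighted averaging of an affine function
returns its value at `tⁿ` (`weight_avg`). Averaging the continuous equations, a competitor `(ũ, φ̃)`
therefore satisfies the scheme up to a residual controlled by its own energy-norm error
(`step_residual`). The discrete difference `e = u_h - ũ`, `η = φ_h - φ̃` solves the scheme with this
residual and with `e⁰ = 0`, so testing with `(e, η)` (`step_energy`) and the discrete Gronwall
inequality (`gronwall`) bound `τ ∑ (‖eⁿ‖² + ‖ηⁿ‖²)`. The time derivative of `e` is recovered in the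
dual norm from the equation itself, using the `H`-stable projection (`step_star`). The triangle
inequality (`gap_le`) concludes.
-/

/-!
STATEMENT 17: Abstract form of Theorem 4.5, the paper's main result:
well-posedness of the averaged implicit Euler scheme and quasi-optimality in
the energy norm of the fully discrete non-symmetric coupling scheme, with a
constant C depending only on α, C_V, C_k, C_tr, C_d, C_b, C_P, and T.
-/

/-- The dual norm |w|_* := sup_{0 ≠ v ∈ H} ⟨w,v⟩_L/‖v‖_H. -/
noncomputable def starNorm {H : Type*}
    [NormedAddCommGroup H] [InnerProductSpace ℝ H]
    (innL : H →ₗ[ℝ] H →ₗ[ℝ] ℝ) (w : H) : ℝ :=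
  ⨆ v : {v : H // v ≠ 0}, innL w (v : H) / ‖(v : H)‖

/-! ### Averages over one time interval -/

/-- The weight `ω = 6 s - 2`, `s = (t - tⁿ⁻¹) / τ`, satisfies `∫₀¹ ω ds = ∫₀¹ s ω ds = 1`, so the
weighted average of an affine function is its value at the right end point `tⁿ`. -/
lemma weight_avg (n τ A B : ℝ) (hτ : 0 < τ) :
    τ⁻¹ * ∫ t in ((n - 1) * τ)..(n * τ), (A + ((t - (n - 1) * τ) / τ) * B) *
      ((6 * t - 2 * (n * τ) - 4 * ((n - 1) * τ)) / τ) = A + B := by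
  have key : ∀ t ∈ Set.uIcc ((n - 1) * τ) (n * τ), HasDerivAt
      (fun t : ℝ => A * (3 * (t - (n - 1) * τ) ^ 2 / τ - 2 * (t - (n - 1) * τ))
        + B * (2 * (t - (n - 1) * τ) ^ 3 / τ ^ 2 - (t - (n - 1) * τ) ^ 2 / τ))
      ((A + ((t - (n - 1) * τ) / τ) * B) *
      ((6 * t - 2 * (n * τ) - 4 * ((n - 1) * τ)) / τ)) t := by
    intro t _
    have h1 : HasDerivAt (fun t : ℝ => t - (n - 1) * τ) 1 t := (hasDerivAt_id t).sub_const _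
    have := ((((h1.pow 2).const_mul 3).div_const τ).sub (h1.const_mul 2)).const_mul A |>.add
      (((((h1.pow 3).const_mul 2).div_const (τ ^ 2)).sub ((h1.pow 2).div_const τ)).const_mul B)
    refine this.congr_deriv ?_
    field_simp
    ring
  rw [intervalIntegral.integral_eq_sub_of_hasDerivAt key
    (Continuous.intervalIntegrable (by fun_prop) _ _)]
  field_simp
  ring

/-- Jensen's inequality for the square, followed by a pointwise bound. -/
lemma avg_sq_le {a b τ : ℝ} (hτ : 0 < τ) (hab : b = a + τ) {f g : ℝ → ℝ} {Q : ℝ}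
    (hf : ContinuousOn f (Set.Icc a b)) (hg : ContinuousOn g (Set.Icc a b))
    (h : ∀ t ∈ Set.Icc a b, f t ^ 2 ≤ Q * g t) :
    (τ⁻¹ * ∫ t in a..b, f t) ^ 2 ≤ Q * (τ⁻¹ * ∫ t in a..b, g t) := by
  have hle : a ≤ b := by linarith
  set m := τ⁻¹ * ∫ t in a..b, f t with hm
  have hfi : IntervalIntegrable f MeasureTheory.volume a b := hf.intervalIntegrable_of_Icc hle
  have hgi : IntervalIntegrable g MeasureTheory.volume a b := hg.intervalIntegrable_of_Icc hle
  -- `2 m f - m² ≤ f² ≤ Q g`, integrated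
  have h1 : ∫ t in a..b, (2 * m * f t - m ^ 2) ≤ ∫ t in a..b, Q * g t :=
    intervalIntegral.integral_mono_on hle ((hfi.const_mul _).sub intervalIntegrable_const)
      (hgi.const_mul _) fun t ht => by nlinarith [h t ht, sq_nonneg (f t - m)]
  rw [intervalIntegral.integral_sub (hfi.const_mul _) intervalIntegrable_const,
    intervalIntegral.integral_const_mul, intervalIntegral.integral_const_mul,
    intervalIntegral.integral_const, smul_eq_mul] at h1
  have h2 : ∫ t in a..b, f t = τ * m := by rw [hm]; field_simp
  have h3 : b - a = τ := by linarith
  rw [h2, h3] at h1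
  have h4 : τ * m ^ 2 ≤ τ * (Q * (τ⁻¹ * ∫ t in a..b, g t)) := by
    have : τ * (Q * (τ⁻¹ * ∫ t in a..b, g t)) = Q * ∫ t in a..b, g t := by field_simp
    rw [this]; nlinarith
  exact le_of_mul_le_mul_left h4 hτ

/-- The weighted average of `f` differs from the end point value `A + B` of an affine function
only by the mean-square distance of `f` from that function; `16` comes from `|ω| ≤ 4`. -/
lemma weighted_defect {n τ A B Q : ℝ} (hτ : 0 < τ) {f g : ℝ → ℝ}
    (hf : ContinuousOn f (Set.Icc ((n - 1) * τ) (n * τ)))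
    (hg : ContinuousOn g (Set.Icc ((n - 1) * τ) (n * τ)))
    (h : ∀ t ∈ Set.Icc ((n - 1) * τ) (n * τ),
      (f t - (A + ((t - (n - 1) * τ) / τ) * B)) ^ 2 ≤ Q * g t) :
    (τ⁻¹ * (∫ t in ((n - 1) * τ)..(n * τ), f t *
        ((6 * t - 2 * (n * τ) - 4 * ((n - 1) * τ)) / τ)) - (A + B)) ^ 2
      ≤ 16 * Q * (τ⁻¹ * ∫ t in ((n - 1) * τ)..(n * τ), g t) := by
  have hle : (n - 1) * τ ≤ n * τ := by nlinarith
  rw [← weight_avg n τ A B hτ, ← mul_sub, ← intervalIntegral.integral_sub]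
  · refine avg_sq_le hτ (by ring) ?_ hg ?_
    · exact (hf.mul (by fun_prop)).sub (by fun_prop)
    · intro t ht
      have hw : ((6 * t - 2 * (n * τ) - 4 * ((n - 1) * τ)) / τ) ^ 2 ≤ 16 := by
        have h0 : -2 ≤ (6 * t - 2 * (n * τ) - 4 * ((n - 1) * τ)) / τ := by
          rw [le_div_iff₀ hτ]; nlinarith [ht.1, ht.2]
        have h1 : (6 * t - 2 * (n * τ) - 4 * ((n - 1) * τ)) / τ ≤ 4 := by
          rw [div_le_iff₀ hτ]; nlinarith [ht.1, ht.2]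
        nlinarith
      have := h t ht
      rw [← sub_mul, mul_pow]
      nlinarith [mul_le_mul this hw (sq_nonneg _) ((sq_nonneg _).trans this)]
  · exact (hf.mul (by fun_prop)).intervalIntegrable_of_Icc hle
  · exact Continuous.intervalIntegrable (by fun_prop) _ _

/-! ### Lax-Milgram and discrete Gronwall -/

/-- The Lax-Milgram theorem in weak form. -/
lemma lax_milgram {V : Type*} [NormedAddCommGroup V] [InnerProductSpace ℝ V] [CompleteSpace V]
    {A : V →L[ℝ] V →L[ℝ] ℝ} (hA : IsCoercive A) (l : V →L[ℝ] ℝ) : ∃ u, ∀ v, A u v = l v := by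
  refine ⟨hA.continuousLinearEquivOfBilin.symm ((InnerProductSpace.toDual ℝ V).symm l),
    fun v => ?_⟩
  rw [← hA.continuousLinearEquivOfBilin_apply]
  simp

/-- Discrete Gronwall inequality. For `τ ≤ 1/4` one has `1 / (1 - 2τ) ≤ 1 + 4τ`, so `a n` is bounded
by `exp (4T)` times the accumulated data; summing the hypothesis then controls `∑ x n`. -/
lemma gronwall {N : ℕ} {τ T α K : ℝ} (hτ : 0 < τ) (hτ4 : τ ≤ 1 / 4) (hT : N * τ = T)
    (hα : 0 < α) (hK : 0 ≤ K) {a x I : ℕ → ℝ} (ha : ∀ n, 0 ≤ a n) (ha0 : a 0 = 0)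
    (hx : ∀ n, 0 ≤ x n) (hI : ∀ n ∈ Finset.Icc 1 N, 0 ≤ I n)
    (h : ∀ n ∈ Finset.Icc 1 N, (1 - 2 * τ) * a n + τ * α * x n ≤ a (n - 1) + K * I n) :
    τ * ∑ n ∈ Finset.Icc 1 N, x n
      ≤ K * (1 + 2 * T * Real.exp (4 * T)) / α * ∑ n ∈ Finset.Icc 1 N, I n := by
  set S := ∑ n ∈ Finset.Icc 1 N, I n with hS
  have hS0 : 0 ≤ S := Finset.sum_nonneg hI
  have hT0 : 0 ≤ T := by rw [← hT]; positivity
  have hsub : ∀ n ≤ N, ∑ i ∈ Finset.Icc 1 n, I i ≤ S := fun n hn =>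
    Finset.sum_le_sum_of_subset_of_nonneg (Finset.Icc_subset_Icc_right hn)
      fun i hi _ => hI i hi
  -- explicit growth bound; the step uses `1 ≤ (1 + 4τ)(1 - 2τ)`
  have h1 : ∀ n ≤ N, a n ≤ (1 + 4 * τ) ^ n * (K * ∑ i ∈ Finset.Icc 1 n, I i) := by
    intro n
    induction n with
    | zero => intro _; simp [ha0]
    | succ n ih =>
      intro hn
      have hm : n + 1 ∈ Finset.Icc 1 N := by simp; omega
      have h2 := h _ hm
      have h3 := ih (by omega)
      rw [Finset.sum_Icc_succ_top (by omega)]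
      simp only [Nat.add_sub_cancel] at h2
      have h5 : a (n + 1) ≤ (1 + 4 * τ) * (a n + K * I (n + 1)) := by
        have h6 : (1 - 2 * τ) * a (n + 1) ≤ a n + K * I (n + 1) := by
          nlinarith [mul_nonneg (mul_nonneg hτ.le hα.le) (hx (n + 1))]
        have h7 : 1 ≤ (1 + 4 * τ) * (1 - 2 * τ) := by nlinarith
        nlinarith [mul_le_mul_of_nonneg_left h6 (by positivity : 0 ≤ 1 + 4 * τ),
          mul_le_mul_of_nonneg_right h7 (ha (n + 1))]
      have h8 : (1 : ℝ) ≤ (1 + 4 * τ) ^ n := one_le_pow₀ (by linarith)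
      have h9 : K * I (n + 1) ≤ (1 + 4 * τ) ^ n * (K * I (n + 1)) :=
        le_mul_of_one_le_left (mul_nonneg hK (hI _ hm)) h8
      calc a (n + 1) ≤ (1 + 4 * τ) * (a n + K * I (n + 1)) := h5
        _ ≤ (1 + 4 * τ) * ((1 + 4 * τ) ^ n * (K * ∑ i ∈ Finset.Icc 1 n, I i)
              + (1 + 4 * τ) ^ n * (K * I (n + 1))) := by gcongr
        _ = _ := by ring
  have h2 : ∀ n ≤ N, a n ≤ Real.exp (4 * T) * (K * S) := by
    intro n hn
    refine (h1 n hn).trans ?_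
    have h3 : (1 + 4 * τ) ^ n ≤ Real.exp (4 * T) := by
      calc (1 + 4 * τ) ^ n ≤ Real.exp (4 * τ) ^ n := by
            gcongr
            linarith [Real.add_one_le_exp (4 * τ)]
        _ = Real.exp (n * (4 * τ)) := (Real.exp_nat_mul _ _).symm
        _ ≤ Real.exp (4 * T) := by
            apply Real.exp_le_exp.2
            have : (n : ℝ) ≤ N := by exact_mod_cast hn
            nlinarith
    have h4 : 0 ≤ ∑ i ∈ Finset.Icc 1 n, I i := Finset.sum_nonneg fun i hi =>
      hI i (Finset.Icc_subset_Icc_right hn hi)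
    have := hsub n hn
    gcongr
  have h3 : ∀ n ≤ N, a n + τ * α * ∑ i ∈ Finset.Icc 1 n, x i
      ≤ K * ∑ i ∈ Finset.Icc 1 n, I i + n * (2 * τ * (Real.exp (4 * T) * (K * S))) := by
    intro n
    induction n with
    | zero => intro _; simp [ha0]
    | succ n ih =>
      intro hn
      have hm : n + 1 ∈ Finset.Icc 1 N := by simp; omega
      have h4 := h _ hm
      have h5 := ih (by omega)
      have h6 := mul_le_mul_of_nonneg_left (h2 _ hn) (by positivity : 0 ≤ 2 * τ)
      rw [Finset.sum_Icc_succ_top (by omega), Finset.sum_Icc_succ_top (by omega)]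
      simp only [Nat.add_sub_cancel] at h4
      push_cast
      linarith
  have h4 := h3 N le_rfl
  have h5 := ha N
  rw [div_mul_eq_mul_div, le_div_iff₀ hα]
  rw [← hS] at h4
  have h6 : (N : ℝ) * (2 * τ * (Real.exp (4 * T) * (K * S)))
      = 2 * T * (Real.exp (4 * T) * (K * S)) := by rw [← hT]; ring
  rw [h6] at h4
  linarith

/-! ### The dual norm -/

section StarNorm

variable {H : Type*} [NormedAddCommGroup H] [InnerProductSpace ℝ H] {innL : H →ₗ[ℝ] H →ₗ[ℝ] ℝ}

lemma innL_abs_le (hsymm : ∀ x y : H, innL x y = innL y x) (hpos : ∀ x : H, 0 ≤ innL x x)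
    (hle : ∀ v : H, innL v v ≤ ‖v‖ ^ 2) (x y : H) : |innL x y| ≤ ‖x‖ * ‖y‖ := by
  have h := LinearMap.BilinForm.apply_sq_le_of_symm innL hpos ⟨hsymm⟩ x y
  apply abs_le_of_sq_le_sq _ (by positivity)
  calc innL x y ^ 2 ≤ innL x x * innL y y := h
    _ ≤ ‖x‖ ^ 2 * ‖y‖ ^ 2 := mul_le_mul (hle x) (hle y) (hpos y) (by positivity)
    _ = _ := by ring

lemma innL_le_starNorm (hbd : ∀ x y : H, |innL x y| ≤ ‖x‖ * ‖y‖) (w v : H) :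
    innL w v ≤ starNorm innL w * ‖v‖ := by
  by_cases hv : v = 0
  · simp [hv]
  have hv' : 0 < ‖v‖ := norm_pos_iff.2 hv
  rw [← div_le_iff₀ hv']
  refine le_ciSup (f := fun v : {v : H // v ≠ 0} => innL w (v : H) / ‖(v : H)‖)
    ⟨‖w‖, ?_⟩ ⟨v, hv⟩
  rintro _ ⟨z, rfl⟩
  exact (div_le_iff₀ (norm_pos_iff.2 z.2)).2 ((le_abs_self _).trans (hbd _ _))

lemma abs_innL_le_starNorm (hbd : ∀ x y : H, |innL x y| ≤ ‖x‖ * ‖y‖) (w v : H) :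
    |innL w v| ≤ starNorm innL w * ‖v‖ := by
  refine abs_le'.2 ⟨innL_le_starNorm hbd w v, ?_⟩
  simpa using innL_le_starNorm hbd w (-v)

lemma starNorm_le {w : H} {M : ℝ} (hM : 0 ≤ M) (h : ∀ v, innL w v ≤ M * ‖v‖) :
    starNorm innL w ≤ M :=
  Real.iSup_le (fun v => (div_le_iff₀ (norm_pos_iff.2 v.2)).2 (h v)) hM

lemma starNorm_nonneg (hbd : ∀ x y : H, |innL x y| ≤ ‖x‖ * ‖y‖) (w : H) :
    0 ≤ starNorm innL w := by
  by_cases h : ∃ v : H, v ≠ 0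
  · obtain ⟨v, hv⟩ := h
    exact nonneg_of_mul_nonneg_left ((abs_nonneg _).trans (abs_innL_le_starNorm hbd w v))
      (norm_pos_iff.2 hv)
  · push Not at h
    have : IsEmpty {v : H // v ≠ 0} := ⟨fun v => v.2 (h v)⟩
    simp [starNorm, Real.iSup_of_isEmpty]

lemma starNorm_add_le (hbd : ∀ x y : H, |innL x y| ≤ ‖x‖ * ‖y‖) (x y : H) :
    starNorm innL (x + y) ≤ starNorm innL x + starNorm innL y := by
  refine starNorm_le (add_nonneg (starNorm_nonneg hbd x) (starNorm_nonneg hbd y)) fun v => ?_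
  rw [map_add, LinearMap.add_apply, add_mul]
  exact add_le_add (innL_le_starNorm hbd x v) (innL_le_starNorm hbd y v)

lemma continuous_starNorm (hbd : ∀ x y : H, |innL x y| ≤ ‖x‖ * ‖y‖) :
    Continuous (starNorm innL) := by
  have h1 : ∀ w, starNorm innL w ≤ ‖w‖ := fun w =>
    starNorm_le (norm_nonneg w) fun v => (le_abs_self _).trans (hbd w v)
  refine (LipschitzWith.of_le_add fun x y => ?_).continuous
  have h2 := starNorm_add_le hbd y (x - y)
  rw [add_sub_cancel] at h2
  rw [dist_eq_norm]
  linarith [h1 (x - y)]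

end StarNorm

/-! ### A single time step -/

section Step

variable {H B : Type*} [NormedAddCommGroup H] [InnerProductSpace ℝ H]
  [NormedAddCommGroup B] [InnerProductSpace ℝ B]
  {innL : H →ₗ[ℝ] H →ₗ[ℝ] ℝ} {d : H →ₗ[ℝ] H →ₗ[ℝ] ℝ} {c : B →ₗ[ℝ] H →ₗ[ℝ] ℝ}
  {k : H →ₗ[ℝ] B →ₗ[ℝ] ℝ} {b : B →ₗ[ℝ] B →ₗ[ℝ] ℝ}

/-- Solvability of one implicit Euler step: since `τ⁻¹ ≥ 1`, the Gårding inequality makes the step's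
bilinear form coercive on `Hh × Bh`. -/
lemma step_exists [CompleteSpace H] [CompleteSpace B] {Cd Ctr Ck Cb α τ : ℝ} (hα : 0 < α)
    (hpos : ∀ x : H, 0 ≤ innL x x)
    (hbd : ∀ x y : H, |innL x y| ≤ ‖x‖ * ‖y‖)
    (hd : ∀ u v : H, |d u v| ≤ Cd * ‖u‖ * ‖v‖)
    (hc : ∀ (ψ : B) (v : H), |c ψ v| ≤ Ctr * ‖ψ‖ * ‖v‖)
    (hk : ∀ (v : H) (ψ : B), |k v ψ| ≤ Ck * ‖v‖ * ‖ψ‖)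
    (hb : ∀ φ ψ : B, |b φ ψ| ≤ Cb * ‖φ‖ * ‖ψ‖)
    (hgard : ∀ (v : H) (ψ : B),
      α * (‖v‖ ^ 2 + ‖ψ‖ ^ 2) ≤ d v v - c ψ v + k v ψ + b ψ ψ + innL v v)
    (hτ : 0 < τ) (hτ4 : τ ≤ 1 / 4)
    {Hh : Submodule ℝ H} {Bh : Submodule ℝ B}
    (hH : IsClosed (Hh : Set H)) (hB : IsClosed (Bh : Set B))
    (f : H →L[ℝ] ℝ) (g : B →L[ℝ] ℝ) (w : H) :
    ∃ p : H × B, (p.1 ∈ Hh ∧ p.2 ∈ Bh) ∧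
      (∀ v ∈ Hh, innL (τ⁻¹ • (p.1 - w)) v + d p.1 v - c p.2 v = f v) ∧
      (∀ ψ ∈ Bh, k p.1 ψ + b p.2 ψ = g ψ) := by
  have := hH.completeSpace_coe
  have := hB.completeSpace_coe
  let L := innL.mkContinuous₂ 1 (by simpa using hbd)
  let D := d.mkContinuous₂ Cd hd
  let Cc := c.mkContinuous₂ Ctr hc
  let K := k.mkContinuous₂ Ck hk
  let Bb := b.mkContinuous₂ Cb hb
  let p₁ : WithLp 2 (Hh × Bh) →L[ℝ] H := Hh.subtypeL ∘L WithLp.fstL 2 ℝ Hh Bh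
  let p₂ : WithLp 2 (Hh × Bh) →L[ℝ] B := Bh.subtypeL ∘L WithLp.sndL 2 ℝ Hh Bh
  let A := τ⁻¹ • L.bilinearComp p₁ p₁ + D.bilinearComp p₁ p₁ - Cc.bilinearComp p₂ p₁
    + K.bilinearComp p₁ p₂ + Bb.bilinearComp p₂ p₂
  have hAapp : ∀ x y, A x y = τ⁻¹ * innL x.fst y.fst + d x.fst y.fst - c x.snd y.fst
      + k x.fst y.snd + b x.snd y.snd := fun x y => rfl
  have hτinv : 1 ≤ τ⁻¹ := (one_le_inv₀ hτ).2 (by linarith)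
  have hA : IsCoercive A := by
    refine ⟨α, hα, fun x => ?_⟩
    have h1 := hgard x.fst x.snd
    have h2 := WithLp.prod_norm_sq_eq_of_L2 x
    have h3 : ‖x.fst‖ = ‖(x.fst : H)‖ := rfl
    have h4 : ‖x.snd‖ = ‖(x.snd : B)‖ := rfl
    rw [mul_assoc, ← sq, h2, h3, h4, hAapp]
    nlinarith [hpos (x.fst : H)]
  obtain ⟨x, hx⟩ := lax_milgram hA ((f + τ⁻¹ • L w) ∘L p₁ + g ∘L p₂)
  have hx' : ∀ (v : Hh) (ψ : Bh), τ⁻¹ * innL x.fst v + d x.fst v - c x.snd v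
      + k x.fst ψ + b x.snd ψ = f v + τ⁻¹ * innL w v + g ψ := fun v ψ =>
    hx (WithLp.toLp 2 (v, ψ))
  refine ⟨(x.fst, x.snd), ⟨x.fst.2, x.snd.2⟩, fun v hv => ?_, fun ψ hψ => ?_⟩
  · have := hx' ⟨v, hv⟩ 0
    simp only [ZeroMemClass.coe_zero, map_zero] at this
    simp only [map_smul, map_sub, LinearMap.smul_apply, LinearMap.sub_apply, smul_eq_mul]
    linarith
  · have := hx' 0 ⟨ψ, hψ⟩
    simp only [ZeroMemClass.coe_zero, map_zero] at this
    linarith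

/-- Energy estimate for one step whose residuals, tested with `e` and `η` themselves, are bounded by
`ρ ‖e‖` and `ρ ‖η‖`. -/
lemma step_energy {α τ ρ : ℝ} (hα : 0 < α)
    (hsymm : ∀ x y : H, innL x y = innL y x) (hpos : ∀ x : H, 0 ≤ innL x x)
    (hgard : ∀ (v : H) (ψ : B),
      α * (‖v‖ ^ 2 + ‖ψ‖ ^ 2) ≤ d v v - c ψ v + k v ψ + b ψ ψ + innL v v)
    (hτ : 0 < τ) {e e₀ : H} {η : B}
    (hH : |innL (τ⁻¹ • (e - e₀)) e + d e e - c η e| ≤ ρ * ‖e‖)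
    (hB : |k e η + b η η| ≤ ρ * ‖η‖) :
    (1 - 2 * τ) * innL e e + τ * α * (‖e‖ ^ 2 + ‖η‖ ^ 2)
      ≤ innL e₀ e₀ + 2 / α * (τ * ρ ^ 2) := by
  have h1 := (le_abs_self _).trans hH
  have h2 := (le_abs_self _).trans hB
  have h3 := hgard e η
  have h4 := hpos (e - e₀)
  simp only [map_smul, map_sub, LinearMap.smul_apply, LinearMap.sub_apply, smul_eq_mul] at h1 h4
  rw [hsymm e e₀] at h4
  -- Young's inequality, absorbing half of the coercivity
  have h5 : ∀ x : ℝ, ρ * x ≤ α / 2 * x ^ 2 + ρ ^ 2 / (2 * α) := fun x => by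
    have : α / 2 * x ^ 2 + ρ ^ 2 / (2 * α) - ρ * x = (α * x - ρ) ^ 2 / (2 * α) := by
      field_simp; ring
    have h0 : 0 ≤ (α * x - ρ) ^ 2 / (2 * α) := by positivity
    linarith
  have h6 : τ⁻¹ * (innL e e - innL e₀ e) + α / 2 * (‖e‖ ^ 2 + ‖η‖ ^ 2)
      ≤ innL e e + ρ ^ 2 / α := by
    have : ρ ^ 2 / α = ρ ^ 2 / (2 * α) + ρ ^ 2 / (2 * α) := by field_simp; ring
    linarith [h5 ‖e‖, h5 ‖η‖]
  have h7 := mul_le_mul_of_nonneg_left h6 hτ.le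
  have h8 : τ * (τ⁻¹ * (innL e e - innL e₀ e) + α / 2 * (‖e‖ ^ 2 + ‖η‖ ^ 2))
      = (innL e e - innL e₀ e) + τ * α / 2 * (‖e‖ ^ 2 + ‖η‖ ^ 2) := by
    field_simp
  have h9 : 2 / α * (τ * ρ ^ 2) = 2 * (τ * (ρ ^ 2 / α)) := by ring
  rw [h8] at h7
  rw [h9]
  linarith

/-- The discrete time derivative lies in `Hh`, so pairing it with `v` is the same as pairing it with
`P v`; the step equation and the `H`-stability of `P` then bound its dual norm. -/
lemma step_star {Cd Ctr CP τ ρ : ℝ} (hCd : 0 < Cd) (hCtr : 0 < Ctr)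
    (hCP : 0 < CP) (hρ : 0 ≤ ρ)
    (hsymm : ∀ x y : H, innL x y = innL y x)
    (hbd : ∀ x y : H, |innL x y| ≤ ‖x‖ * ‖y‖)
    (hd : ∀ u v : H, |d u v| ≤ Cd * ‖u‖ * ‖v‖)
    (hc : ∀ (ψ : B) (v : H), |c ψ v| ≤ Ctr * ‖ψ‖ * ‖v‖)
    {Hh : Submodule ℝ H} {P : H →ₗ[ℝ] H} (hP : ∀ v : H, P v ∈ Hh)
    (hPo : ∀ v : H, ∀ s ∈ Hh, innL (v - P v) s = 0) (hPb : ∀ v : H, ‖P v‖ ≤ CP * ‖v‖)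
    {e e₀ : H} {η : B} (he : e ∈ Hh) (he₀ : e₀ ∈ Hh)
    (hH : ∀ v ∈ Hh, |innL (τ⁻¹ • (e - e₀)) v + d e v - c η v| ≤ ρ * ‖v‖) :
    starNorm innL (τ⁻¹ • (e - e₀)) ^ 2
      ≤ 3 * CP ^ 2 * (ρ ^ 2 + Cd ^ 2 * ‖e‖ ^ 2 + Ctr ^ 2 * ‖η‖ ^ 2) := by
  have hM : 0 ≤ ρ + Cd * ‖e‖ + Ctr * ‖η‖ := by positivity
  have h1 : starNorm innL (τ⁻¹ • (e - e₀)) ≤ CP * (ρ + Cd * ‖e‖ + Ctr * ‖η‖) := by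
    refine starNorm_le (by positivity) fun v => ?_
    have hmem : τ⁻¹ • (e - e₀) ∈ Hh := Hh.smul_mem _ (Hh.sub_mem he he₀)
    have h2 := hPo v _ hmem
    rw [hsymm, map_sub, sub_eq_zero] at h2
    have h3 := abs_le.1 (hH _ (hP v))
    have h4 := abs_le.1 (hd e (P v))
    have h5 := abs_le.1 (hc η (P v))
    calc innL (τ⁻¹ • (e - e₀)) v ≤ (ρ + Cd * ‖e‖ + Ctr * ‖η‖) * ‖P v‖ := by rw [h2]; linarith
      _ ≤ (ρ + Cd * ‖e‖ + Ctr * ‖η‖) * (CP * ‖v‖) := by gcongr; exact hPb v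
      _ = _ := by ring
  calc _ ≤ (CP * (ρ + Cd * ‖e‖ + Ctr * ‖η‖)) ^ 2 :=
        pow_le_pow_left₀ (starNorm_nonneg hbd _) h1 2
    _ = CP ^ 2 * (ρ + Cd * ‖e‖ + Ctr * ‖η‖) ^ 2 := by ring
    _ ≤ CP ^ 2 * (3 * (ρ ^ 2 + (Cd * ‖e‖) ^ 2 + (Ctr * ‖η‖) ^ 2)) := by
        gcongr
        nlinarith [sq_nonneg (ρ - Cd * ‖e‖), sq_nonneg (ρ - Ctr * ‖η‖),
          sq_nonneg (Cd * ‖e‖ - Ctr * ‖η‖)]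
    _ = _ := by ring

/-- Both residual functionals of the pointwise error `(w, x, y)` (time derivative, `H`-part, `B`-part)
are bounded by the integrand of the energy norm. -/
lemma defect_sq_le {Cd Ctr Ck Cb : ℝ} (hCd : 0 < Cd) (hCtr : 0 < Ctr) (hCk : 0 < Ck)
    (hCb : 0 < Cb)
    (hbd : ∀ x y : H, |innL x y| ≤ ‖x‖ * ‖y‖)
    (hd : ∀ u v : H, |d u v| ≤ Cd * ‖u‖ * ‖v‖)
    (hc : ∀ (ψ : B) (v : H), |c ψ v| ≤ Ctr * ‖ψ‖ * ‖v‖)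
    (hk : ∀ (v : H) (ψ : B), |k v ψ| ≤ Ck * ‖v‖ * ‖ψ‖)
    (hb : ∀ φ ψ : B, |b φ ψ| ≤ Cb * ‖φ‖ * ‖ψ‖) (w x : H) (y : B) :
    (∀ v : H, (innL w v + d x v - c y v) ^ 2
      ≤ 3 * (1 + Cd ^ 2 + Ctr ^ 2 + Ck ^ 2 + Cb ^ 2) * ‖v‖ ^ 2 *
        (‖x‖ ^ 2 + starNorm innL w ^ 2 + ‖y‖ ^ 2)) ∧
    (∀ ψ : B, (k x ψ + b y ψ) ^ 2
      ≤ 3 * (1 + Cd ^ 2 + Ctr ^ 2 + Ck ^ 2 + Cb ^ 2) * ‖ψ‖ ^ 2 *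
        (‖x‖ ^ 2 + starNorm innL w ^ 2 + ‖y‖ ^ 2)) := by
  have hs := starNorm_nonneg hbd w
  set s := starNorm innL w with hsdef
  have key : ∀ p q r : ℝ, (p + q + r) ^ 2 ≤ 3 * (p ^ 2 + q ^ 2 + r ^ 2) := fun p q r => by
    nlinarith [sq_nonneg (p - q), sq_nonneg (p - r), sq_nonneg (q - r)]
  constructor
  · intro v
    have h1 := abs_le.1 (abs_innL_le_starNorm hbd w v)
    have h2 := abs_le.1 (hd x v)
    have h3 := abs_le.1 (hc y v)
    have h4 : |innL w v + d x v - c y v| ≤ (s + Cd * ‖x‖ + Ctr * ‖y‖) * ‖v‖ :=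
      abs_le.2 ⟨by linarith, by linarith⟩
    calc _ ≤ ((s + Cd * ‖x‖ + Ctr * ‖y‖) * ‖v‖) ^ 2 :=
          sq_le_sq' (abs_le.1 h4).1 (abs_le.1 h4).2
      _ = (s + Cd * ‖x‖ + Ctr * ‖y‖) ^ 2 * ‖v‖ ^ 2 := by ring
      _ ≤ (3 * (s ^ 2 + (Cd * ‖x‖) ^ 2 + (Ctr * ‖y‖) ^ 2)) * ‖v‖ ^ 2 := by
          gcongr; exact key _ _ _
      _ ≤ (3 * ((1 + Cd ^ 2 + Ctr ^ 2 + Ck ^ 2 + Cb ^ 2) * (‖x‖ ^ 2 + s ^ 2 + ‖y‖ ^ 2)))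
            * ‖v‖ ^ 2 := by
          gcongr
          rw [← sub_nonneg]
          ring_nf
          positivity
      _ = _ := by ring
  · intro ψ
    have h2 := abs_le.1 (hk x ψ)
    have h3 := abs_le.1 (hb y ψ)
    have h4 : |k x ψ + b y ψ| ≤ (0 + Ck * ‖x‖ + Cb * ‖y‖) * ‖ψ‖ :=
      abs_le.2 ⟨by linarith, by linarith⟩
    calc _ ≤ ((0 + Ck * ‖x‖ + Cb * ‖y‖) * ‖ψ‖) ^ 2 :=
          sq_le_sq' (abs_le.1 h4).1 (abs_le.1 h4).2
      _ = (0 + Ck * ‖x‖ + Cb * ‖y‖) ^ 2 * ‖ψ‖ ^ 2 := by ring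
      _ ≤ (3 * (0 ^ 2 + (Ck * ‖x‖) ^ 2 + (Cb * ‖y‖) ^ 2)) * ‖ψ‖ ^ 2 := by
          gcongr; exact key _ _ _
      _ ≤ (3 * ((1 + Cd ^ 2 + Ctr ^ 2 + Ck ^ 2 + Cb ^ 2) * (‖x‖ ^ 2 + s ^ 2 + ‖y‖ ^ 2)))
            * ‖ψ‖ ^ 2 := by
          gcongr
          rw [← sub_nonneg]
          ring_nf
          positivity
      _ = _ := by ring

end Step
/-! ### Comparison of discrete and continuous solutions -/

section Main

variable {H B : Type*} [NormedAddCommGroup H] [InnerProductSpace ℝ H]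
  [NormedAddCommGroup B] [InnerProductSpace ℝ B]
  {innL : H →ₗ[ℝ] H →ₗ[ℝ] ℝ} {d : H →ₗ[ℝ] H →ₗ[ℝ] ℝ} {c : B →ₗ[ℝ] H →ₗ[ℝ] ℝ}
  {k : H →ₗ[ℝ] B →ₗ[ℝ] ℝ} {b : B →ₗ[ℝ] B →ₗ[ℝ] ℝ}

/-- Squared energy-norm error density on the `n`-th interval of the function running linearly from
`x₀` to `x₁` together with the constant `y`, measured against `(u, φ)`. -/
noncomputable def gap (innL : H →ₗ[ℝ] H →ₗ[ℝ] ℝ) (u u' : ℝ → H) (φ : ℝ → B) (τ n : ℝ)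
    (x₀ x₁ : H) (y : B) (t : ℝ) : ℝ :=
  ‖u t - (x₀ + ((t - (n - 1) * τ) / τ) • (x₁ - x₀))‖ ^ 2
    + (starNorm innL (u' t - τ⁻¹ • (x₁ - x₀))) ^ 2 + ‖φ t - y‖ ^ 2

lemma gap_nonneg (u u' : ℝ → H) (φ : ℝ → B) (τ n : ℝ) (x₀ x₁ : H) (y : B) (t : ℝ) :
    0 ≤ gap innL u u' φ τ n x₀ x₁ y t := by
  unfold gap; positivity

lemma continuousOn_gap (hbd : ∀ x y : H, |innL x y| ≤ ‖x‖ * ‖y‖)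
    {u u' : ℝ → H} {φ : ℝ → B} {s : Set ℝ} (hu : ContinuousOn u s) (hu' : ContinuousOn u' s)
    (hφ : ContinuousOn φ s) (τ n : ℝ) (x₀ x₁ : H) (y : B) :
    ContinuousOn (gap innL u u' φ τ n x₀ x₁ y) s := by
  have h := (continuous_starNorm hbd).comp_continuousOn
    (hu'.sub (continuousOn_const (c := τ⁻¹ • (x₁ - x₀))))
  unfold gap
  refine ContinuousOn.add (ContinuousOn.add ?_ (h.pow 2)) ?_
  · fun_prop
  · fun_prop

/-- Triangle inequality: replacing the discrete pair `(x, y)` by `(z, w)` changes the error density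
by at most a multiple of the squared nodal differences. -/
lemma gap_le {τ n t : ℝ} (hτ : 0 < τ) (ht : t ∈ Set.Icc ((n - 1) * τ) (n * τ))
    (hbd : ∀ x y : H, |innL x y| ≤ ‖x‖ * ‖y‖)
    (u u' : ℝ → H) (φ : ℝ → B) (x₀ x₁ z₀ z₁ : H) (y w : B) :
    gap innL u u' φ τ n z₀ z₁ w t ≤ 2 * gap innL u u' φ τ n x₀ x₁ y t
      + (4 * (‖z₀ - x₀‖ ^ 2 + ‖z₁ - x₁‖ ^ 2)
        + 2 * starNorm innL (τ⁻¹ • ((z₁ - x₁) - (z₀ - x₀))) ^ 2 + 2 * ‖w - y‖ ^ 2) := by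
  have key : ∀ p q r : ℝ, 0 ≤ p → p ≤ q + r → p ^ 2 ≤ 2 * q ^ 2 + 2 * r ^ 2 := fun p q r hp h => by
    nlinarith [sq_nonneg (q - r)]
  set σ := (t - (n - 1) * τ) / τ with hσ
  have hσ0 : 0 ≤ σ := div_nonneg (by linarith [ht.1]) hτ.le
  have hσ1 : σ ≤ 1 := by rw [hσ, div_le_one hτ]; linarith [ht.2]
  have h1 : ‖u t - (z₀ + σ • (z₁ - z₀))‖
      ≤ ‖u t - (x₀ + σ • (x₁ - x₀))‖ + (‖z₀ - x₀‖ + ‖z₁ - x₁‖) := by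
    have e1 : u t - (z₀ + σ • (z₁ - z₀)) = (u t - (x₀ + σ • (x₁ - x₀)))
        - ((1 - σ) • (z₀ - x₀) + σ • (z₁ - x₁)) := by module
    rw [e1]
    refine (norm_sub_le _ _).trans (add_le_add_right ((norm_add_le _ _).trans ?_) _)
    rw [norm_smul, norm_smul, Real.norm_of_nonneg hσ0, Real.norm_of_nonneg (sub_nonneg.2 hσ1)]
    nlinarith [norm_nonneg (z₀ - x₀), norm_nonneg (z₁ - x₁)]
  have h2 : starNorm innL (u' t - τ⁻¹ • (z₁ - z₀)) ≤ starNorm innL (u' t - τ⁻¹ • (x₁ - x₀))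
      + starNorm innL (τ⁻¹ • ((z₁ - x₁) - (z₀ - x₀))) := by
    have e1 : u' t - τ⁻¹ • (z₁ - z₀) = (u' t - τ⁻¹ • (x₁ - x₀))
        + (-1 : ℝ) • (τ⁻¹ • ((z₁ - x₁) - (z₀ - x₀))) := by module
    rw [e1]
    refine (starNorm_add_le hbd _ _).trans (add_le_add_right ?_ _)
    refine starNorm_le (starNorm_nonneg hbd _) fun v => ?_
    rw [map_smul, LinearMap.smul_apply, smul_eq_mul, neg_one_mul]
    exact (neg_le_abs _).trans (abs_innL_le_starNorm hbd _ v)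
  have h3 : ‖φ t - w‖ ≤ ‖φ t - y‖ + ‖w - y‖ := by
    rw [← sub_sub_sub_cancel_right (φ t) w y]; exact norm_sub_le _ _
  have k1 := key _ _ _ (norm_nonneg _) h1
  have k2 := key _ _ _ (starNorm_nonneg hbd _) h2
  have k3 := key _ _ _ (norm_nonneg _) h3
  unfold gap
  rw [← hσ]
  nlinarith [sq_nonneg (‖z₀ - x₀‖ - ‖z₁ - x₁‖)]

/-- Any discrete pair `(x, y)` satisfies the averaged step equations up to a residual of size `ρ`,
where `ρ²` is a multiple of the time average of its squared energy-norm error. -/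
lemma step_residual {Cd Ctr Ck Cb : ℝ} (hCd : 0 < Cd) (hCtr : 0 < Ctr) (hCk : 0 < Ck)
    (hCb : 0 < Cb)
    (hbd : ∀ x y : H, |innL x y| ≤ ‖x‖ * ‖y‖)
    (hd : ∀ u v : H, |d u v| ≤ Cd * ‖u‖ * ‖v‖)
    (hc : ∀ (ψ : B) (v : H), |c ψ v| ≤ Ctr * ‖ψ‖ * ‖v‖)
    (hk : ∀ (v : H) (ψ : B), |k v ψ| ≤ Ck * ‖v‖ * ‖ψ‖)
    (hb : ∀ φ ψ : B, |b φ ψ| ≤ Cb * ‖φ‖ * ‖ψ‖) {τ n : ℝ} (hτ : 0 < τ)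
    {F : ℝ → H →L[ℝ] ℝ} {G : ℝ → B →L[ℝ] ℝ} {u u' : ℝ → H} {φ : ℝ → B}
    (hF : ContinuousOn F (Set.Icc ((n - 1) * τ) (n * τ)))
    (hG : ContinuousOn G (Set.Icc ((n - 1) * τ) (n * τ)))
    (hu : ContinuousOn u (Set.Icc ((n - 1) * τ) (n * τ)))
    (hu' : ContinuousOn u' (Set.Icc ((n - 1) * τ) (n * τ)))
    (hφ : ContinuousOn φ (Set.Icc ((n - 1) * τ) (n * τ)))
    (heq : ∀ t ∈ Set.Icc ((n - 1) * τ) (n * τ),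
      (∀ v : H, innL (u' t) v + d (u t) v - c (φ t) v = F t v) ∧
      (∀ ψ : B, k (u t) ψ + b (φ t) ψ = G t ψ)) (x₀ x₁ : H) (y : B) {M ρ : ℝ}
    (hM : M = 3 * (1 + Cd ^ 2 + Ctr ^ 2 + Ck ^ 2 + Cb ^ 2)) (hρ : 0 ≤ ρ)
    (hρM : τ * ρ ^ 2 =
      16 * M * ∫ t in ((n - 1) * τ)..(n * τ), gap innL u u' φ τ n x₀ x₁ y t) :
    (∀ v : H, |τ⁻¹ * (∫ t in ((n - 1) * τ)..(n * τ), F t v *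
          ((6 * t - 2 * (n * τ) - 4 * ((n - 1) * τ)) / τ))
        - (innL (τ⁻¹ • (x₁ - x₀)) v + d x₁ v - c y v)| ≤ ρ * ‖v‖) ∧
    (∀ ψ : B, |τ⁻¹ * (∫ t in ((n - 1) * τ)..(n * τ), G t ψ *
          ((6 * t - 2 * (n * τ) - 4 * ((n - 1) * τ)) / τ))
        - (k x₁ ψ + b y ψ)| ≤ ρ * ‖ψ‖) := by
  have hρ2 : ρ ^ 2 = 16 * M * (τ⁻¹ * ∫ t in ((n - 1) * τ)..(n * τ),
      gap innL u u' φ τ n x₀ x₁ y t) := by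
    rw [mul_left_comm, ← hρM]; field_simp
  have hgap := continuousOn_gap hbd hu hu' hφ τ n x₀ x₁ y
  have hpt := fun t => defect_sq_le hCd hCtr hCk hCb hbd hd hc hk hb
    (u' t - τ⁻¹ • (x₁ - x₀)) (u t - (x₀ + ((t - (n - 1) * τ) / τ) • (x₁ - x₀))) (φ t - y)
  rw [← hM] at hpt
  constructor
  · intro v
    apply abs_le_of_sq_le_sq _ (by positivity)
    have h1 := weighted_defect (A := innL (τ⁻¹ • (x₁ - x₀)) v + d x₀ v - c y v)
      (B := d (x₁ - x₀) v) (Q := M * ‖v‖ ^ 2) hτ (f := fun t => F t v)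
      (hF.clm_apply continuousOn_const) hgap (fun t ht => by
        refine le_of_eq_of_le ?_ ((hpt t).1 v)
        rw [← (heq t ht).1 v]
        simp only [map_sub, map_add, map_smul, LinearMap.sub_apply, LinearMap.add_apply,
          LinearMap.smul_apply, smul_eq_mul]
        ring)
    refine le_of_eq_of_le ?_ (h1.trans_eq ?_)
    · simp only [map_sub, LinearMap.sub_apply]
      ring
    · rw [mul_pow, hρ2]; ring
  · intro ψ
    apply abs_le_of_sq_le_sq _ (by positivity)
    have h1 := weighted_defect (A := k x₀ ψ + b y ψ)
      (B := k (x₁ - x₀) ψ) (Q := M * ‖ψ‖ ^ 2) hτ (f := fun t => G t ψ)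
      (hG.clm_apply continuousOn_const) hgap (fun t ht => by
        refine le_of_eq_of_le ?_ ((hpt t).2 ψ)
        rw [← (heq t ht).2 ψ]
        simp only [map_sub, map_add, map_smul, LinearMap.sub_apply, LinearMap.add_apply,
          LinearMap.smul_apply, smul_eq_mul]
        ring)
    refine le_of_eq_of_le ?_ (h1.trans_eq ?_)
    · simp only [map_sub, LinearMap.sub_apply]
      ring
    · rw [mul_pow, hρ2]; ring

/-- The averaged right-hand side as a single bounded functional, evaluated at `v`. -/
lemma integral_functional {E : Type*} [NormedAddCommGroup E] [NormedSpace ℝ E] {p q τ : ℝ}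
    (hpq : p ≤ q) {F : ℝ → E →L[ℝ] ℝ} {ω : ℝ → ℝ} (hF : ContinuousOn F (Set.Icc p q))
    (hω : Continuous ω) (v : E) :
    (τ⁻¹ • ∫ t in p..q, ω t • F t) v = τ⁻¹ * ∫ t in p..q, F t v * ω t := by
  have hi : IntervalIntegrable (fun t => ω t • F t) MeasureTheory.volume p q :=
    (hω.continuousOn.smul hF).intervalIntegrable_of_Icc hpq
  rw [smul_apply, smul_eq_mul, ContinuousLinearMap.intervalIntegral_apply hi]
  simp [mul_comm]

end Main

theorem fully_discrete_quasi_optimality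
    {H B : Type*}
    [NormedAddCommGroup H] [InnerProductSpace ℝ H] [CompleteSpace H]
    [NormedAddCommGroup B] [InnerProductSpace ℝ B] [CompleteSpace B]
    -- the further inner product ⟨·,·⟩_L on H with ‖v‖_L ≤ ‖v‖_H
    (innL : H →ₗ[ℝ] H →ₗ[ℝ] ℝ)
    (hsymm : ∀ x y : H, innL x y = innL y x)
    (hpos : ∀ x : H, 0 ≤ innL x x)
    (hdef : ∀ x : H, innL x x = 0 → x = 0)
    (hle : ∀ v : H, innL v v ≤ ‖v‖ ^ 2)
    -- the bilinear forms
    (d : H →ₗ[ℝ] H →ₗ[ℝ] ℝ) (c : B →ₗ[ℝ] H →ₗ[ℝ] ℝ)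
    (k : H →ₗ[ℝ] B →ₗ[ℝ] ℝ) (b : B →ₗ[ℝ] B →ₗ[ℝ] ℝ)
    -- the constants
    (Cd Ctr Ck Cb CV α CP : ℝ)
    (hCd : 0 < Cd) (hCtr : 0 < Ctr) (hCk : 0 < Ck)
    (hCb : 0 < Cb) (hCV : 0 < CV) (hα : 0 < α) (hCP : 0 < CP)
    -- boundedness
    (hd : ∀ u v : H, |d u v| ≤ Cd * ‖u‖ * ‖v‖)
    (hc : ∀ (ψ : B) (v : H), |c ψ v| ≤ Ctr * ‖ψ‖ * ‖v‖)
    (hk : ∀ (v : H) (ψ : B), |k v ψ| ≤ Ck * ‖v‖ * ‖ψ‖)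
    (hb : ∀ φ ψ : B, |b φ ψ| ≤ Cb * ‖φ‖ * ‖ψ‖)
    -- ellipticity of b
    (hbell : ∀ ψ : B, CV * ‖ψ‖ ^ 2 ≤ b ψ ψ)
    -- Gårding inequality for the coupled form
    (hgard : ∀ (v : H) (ψ : B),
      α * (‖v‖ ^ 2 + ‖ψ‖ ^ 2) ≤ d v v - c ψ v + k v ψ + b ψ ψ + innL v v) :
    ∀ T > (0 : ℝ), ∃ C > 0,
      ∀ (Hh : Submodule ℝ H) (Bh : Submodule ℝ B),
        IsClosed (Hh : Set H) → IsClosed (Bh : Set B) →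
      -- an H-stable L-orthogonal projection P onto Hh
      ∀ (P : H →ₗ[ℝ] H),
        (∀ v : H, P v ∈ Hh) →
        (∀ v : H, ∀ s ∈ Hh, innL (v - P v) s = 0) →
        (∀ v : H, ‖P v‖ ≤ CP * ‖v‖) →
      -- the uniform time step τ = T/N ≤ 1/4
      ∀ (N : ℕ), 0 < N →
      ∀ (τ : ℝ), τ = T / N → τ ≤ 1 / 4 →
      -- the data and the continuous solution (u, φ)
      ∀ (F : ℝ → H →L[ℝ] ℝ) (G : ℝ → B →L[ℝ] ℝ),
        ContinuousOn F (Set.Icc 0 T) → ContinuousOn G (Set.Icc 0 T) →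
      ∀ (u u' : ℝ → H) (φ : ℝ → B),
        u 0 = 0 →
        (∀ t ∈ Set.Icc (0 : ℝ) T, HasDerivAt u (u' t) t) →
        ContinuousOn u' (Set.Icc 0 T) →
        ContinuousOn φ (Set.Icc 0 T) →
        (∀ t ∈ Set.Icc (0 : ℝ) T,
          (∀ v : H, innL (u' t) v + d (u t) v - c (φ t) v = F t v) ∧
          (∀ ψ : B, k (u t) ψ + b (φ t) ψ = G t ψ)) →
      -- the averaged implicit Euler scheme has a unique solution ...
      ∃ (uh : ℕ → H) (φh : ℕ → B),
        uh 0 = 0 ∧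
        (∀ n ∈ Finset.Icc 1 N, uh n ∈ Hh ∧ φh n ∈ Bh) ∧
        (∀ n ∈ Finset.Icc 1 N,
          (∀ v ∈ Hh,
            innL (τ⁻¹ • (uh n - uh (n - 1))) v + d (uh n) v - c (φh n) v
              = τ⁻¹ * ∫ t in (((n : ℝ) - 1) * τ)..((n : ℝ) * τ),
                  (F t v) *
                    ((6 * t - 2 * ((n : ℝ) * τ) - 4 * (((n : ℝ) - 1) * τ)) / τ)) ∧
          (∀ ψ ∈ Bh,
            k (uh n) ψ + b (φh n) ψ
              = τ⁻¹ * ∫ t in (((n : ℝ) - 1) * τ)..((n : ℝ) * τ),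
                  (G t ψ) *
                    ((6 * t - 2 * ((n : ℝ) * τ) - 4 * (((n : ℝ) - 1) * τ)) / τ))) ∧
        -- ... (uniqueness of the discrete solution) ...
        (∀ (uh' : ℕ → H) (φh' : ℕ → B), uh' 0 = 0 →
          (∀ n ∈ Finset.Icc 1 N, uh' n ∈ Hh ∧ φh' n ∈ Bh) →
          (∀ n ∈ Finset.Icc 1 N,
            (∀ v ∈ Hh,
              innL (τ⁻¹ • (uh' n - uh' (n - 1))) v + d (uh' n) v - c (φh' n) v
                = τ⁻¹ * ∫ t in (((n : ℝ) - 1) * τ)..((n : ℝ) * τ),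
                    (F t v) *
                      ((6 * t - 2 * ((n : ℝ) * τ) - 4 * (((n : ℝ) - 1) * τ)) / τ)) ∧
            (∀ ψ ∈ Bh,
              k (uh' n) ψ + b (φh' n) ψ
                = τ⁻¹ * ∫ t in (((n : ℝ) - 1) * τ)..((n : ℝ) * τ),
                    (G t ψ) *
                      ((6 * t - 2 * ((n : ℝ) * τ) - 4 * (((n : ℝ) - 1) * τ)) / τ))) →
          (∀ n ≤ N, uh' n = uh n) ∧ (∀ n ∈ Finset.Icc 1 N, φh' n = φh n)) ∧
        -- ... and the piecewise linear/constant interpolants (u_{h,τ}, φ_{h,τ})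
        -- are quasi-optimal against any continuous piecewise linear competitor
        -- ũ (with nodal values tu n ∈ Hh, tu 0 = 0) and any piecewise constant
        -- competitor φ̃ (with values tφ n ∈ Bh):
        (∀ (tu : ℕ → H) (tφ : ℕ → B), tu 0 = 0 →
          (∀ n ∈ Finset.Icc 1 N, tu n ∈ Hh ∧ tφ n ∈ Bh) →
          (∑ n ∈ Finset.Icc 1 N, ∫ t in (((n : ℝ) - 1) * τ)..((n : ℝ) * τ),
              (‖u t - (uh (n - 1)
                  + ((t - ((n : ℝ) - 1) * τ) / τ) • (uh n - uh (n - 1)))‖ ^ 2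
                + (starNorm innL (u' t - τ⁻¹ • (uh n - uh (n - 1)))) ^ 2
                + ‖φ t - φh n‖ ^ 2))
            ≤ C * ∑ n ∈ Finset.Icc 1 N,
                ∫ t in (((n : ℝ) - 1) * τ)..((n : ℝ) * τ),
                  (‖u t - (tu (n - 1)
                      + ((t - ((n : ℝ) - 1) * τ) / τ) • (tu n - tu (n - 1)))‖ ^ 2
                    + (starNorm innL (u' t - τ⁻¹ • (tu n - tu (n - 1)))) ^ 2
                    + ‖φ t - tφ n‖ ^ 2)) := by
  intro T hT
  have hbd := innL_abs_le hsymm hpos hle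
  obtain ⟨M, hM⟩ : ∃ M, M = 3 * (1 + Cd ^ 2 + Ctr ^ 2 + Ck ^ 2 + Cb ^ 2) := ⟨_, rfl⟩
  have hM0 : 0 < M := by rw [hM]; positivity
  obtain ⟨C₁, hC₁⟩ : ∃ C₁, C₁ = 2 / α * (16 * M) * (1 + 2 * T * Real.exp (4 * T)) / α := ⟨_, rfl⟩
  have hC₁0 : 0 < C₁ := by rw [hC₁]; positivity
  refine ⟨(2 + 96 * CP ^ 2 * M) + (10 + 6 * CP ^ 2 * (Cd ^ 2 + Ctr ^ 2)) * C₁, by positivity, ?_⟩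
  intro Hh Bh hHc hBc P hP hPo hPb N hN τ hτdef hτ4 F G hF hG u u' φ hu0 hu hu' hφ heq
  have hN' : (0 : ℝ) < N := by exact_mod_cast hN
  have hτ : 0 < τ := by rw [hτdef]; positivity
  have hNτ : N * τ = T := by rw [hτdef]; field_simp
  have hsub : ∀ n ∈ Finset.Icc 1 N,
      Set.Icc (((n : ℝ) - 1) * τ) ((n : ℝ) * τ) ⊆ Set.Icc 0 T := by
    intro n hn
    rw [Finset.mem_Icc] at hn
    have h1 : (1 : ℝ) ≤ n := by exact_mod_cast hn.1
    have h2 : (n : ℝ) ≤ N := by exact_mod_cast hn.2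
    refine Set.Icc_subset_Icc (mul_nonneg (by linarith) hτ.le) ?_
    rw [← hNτ]; gcongr
  have hlen : ∀ n : ℕ, ((n : ℝ) - 1) * τ ≤ (n : ℝ) * τ := fun n => by nlinarith
  have huc : ContinuousOn u (Set.Icc 0 T) := fun t ht => (hu t ht).continuousAt.continuousWithinAt
  -- the scheme is solved step by step
  choose S hSmem hSH hSB using fun (n : ℕ) (w : H) =>
    step_exists hα hpos hbd hd hc hk hb hgard hτ hτ4 hHc hBc
      (τ⁻¹ • ∫ t in (((n : ℝ) - 1) * τ)..((n : ℝ) * τ),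
        ((6 * t - 2 * ((n : ℝ) * τ) - 4 * (((n : ℝ) - 1) * τ)) / τ) • F t)
      (τ⁻¹ • ∫ t in (((n : ℝ) - 1) * τ)..((n : ℝ) * τ),
        ((6 * t - 2 * ((n : ℝ) * τ) - 4 * (((n : ℝ) - 1) * τ)) / τ) • G t) w
  let uh : ℕ → H := fun n => Nat.rec 0 (fun m w => (S (m + 1) w).1) n
  have huh0 : uh 0 = 0 := rfl
  have huh : ∀ n ∈ Finset.Icc 1 N, uh n = (S n (uh (n - 1))).1 := by
    intro n hn
    obtain ⟨m, rfl⟩ : ∃ m, n = m + 1 := ⟨n - 1, by have := (Finset.mem_Icc.1 hn).1; omega⟩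
    rfl
  let φh : ℕ → B := fun n => (S n (uh (n - 1))).2
  have hmem : ∀ n ∈ Finset.Icc 1 N, uh n ∈ Hh ∧ φh n ∈ Bh := fun n hn => by
    rw [huh n hn]; exact hSmem n _
  have hsol : ∀ n ∈ Finset.Icc 1 N,
      (∀ v ∈ Hh, innL (τ⁻¹ • (uh n - uh (n - 1))) v + d (uh n) v - c (φh n) v
        = τ⁻¹ * ∫ t in (((n : ℝ) - 1) * τ)..((n : ℝ) * τ), (F t v) *
            ((6 * t - 2 * ((n : ℝ) * τ) - 4 * (((n : ℝ) - 1) * τ)) / τ)) ∧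
      (∀ ψ ∈ Bh, k (uh n) ψ + b (φh n) ψ
        = τ⁻¹ * ∫ t in (((n : ℝ) - 1) * τ)..((n : ℝ) * τ), (G t ψ) *
            ((6 * t - 2 * ((n : ℝ) * τ) - 4 * (((n : ℝ) - 1) * τ)) / τ)) := by
    intro n hn
    constructor
    · intro v hv
      rw [← integral_functional (hlen n) (hF.mono (hsub n hn)) (by fun_prop) v, huh n hn]
      exact hSH n _ v hv
    · intro ψ hψ
      rw [← integral_functional (hlen n) (hG.mono (hsub n hn)) (by fun_prop) ψ, huh n hn]
      exact hSB n _ ψ hψ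
  refine ⟨uh, φh, huh0, hmem, hsol, ?_, ?_⟩
  · intro vh χh hvh0 hvmem hvsol
    -- the difference of two solutions with equal previous value has zero energy
    have key : ∀ n ∈ Finset.Icc 1 N, vh (n - 1) = uh (n - 1) → vh n = uh n ∧ χh n = φh n := by
      intro n hn hprev
      have h := step_energy (ρ := 0) hα hsymm hpos hgard hτ (e := vh n - uh n) (e₀ := 0)
        (η := χh n - φh n) (by
          have hm := Hh.sub_mem (hvmem n hn).1 (hmem n hn).1
          have h1 := (hvsol n hn).1 _ hm
          have h2 := (hsol n hn).1 _ hm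
          rw [← h2, hprev] at h1
          rw [zero_mul, abs_nonpos_iff]
          simp only [map_smul, LinearMap.smul_apply, smul_eq_mul, sub_zero,
            LinearMap.sub_apply, map_sub] at h1 ⊢
          linarith) (by
          have hm := Bh.sub_mem (hvmem n hn).2 (hmem n hn).2
          have h1 := (hvsol n hn).2 _ hm
          have h2 := (hsol n hn).2 _ hm
          rw [← h2] at h1
          rw [zero_mul, abs_nonpos_iff]
          simp only [LinearMap.sub_apply, map_sub] at h1 ⊢
          linarith)
      have h0 : 0 ≤ (1 - 2 * τ) * innL (vh n - uh n) (vh n - uh n) :=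
        mul_nonneg (by linarith) (hpos _)
      simp only [map_zero, ne_eq, OfNat.ofNat_ne_zero, not_false_eq_true, zero_pow,
        mul_zero, add_zero] at h
      have h3 : τ * α * (‖vh n - uh n‖ ^ 2 + ‖χh n - φh n‖ ^ 2) ≤ τ * α * 0 := by linarith
      have h4 := le_of_mul_le_mul_left h3 (mul_pos hτ hα)
      have h5 : ‖vh n - uh n‖ ^ 2 = 0 := by
        linarith [sq_nonneg ‖vh n - uh n‖, sq_nonneg ‖χh n - φh n‖]
      have h6 : ‖χh n - φh n‖ ^ 2 = 0 := by
        linarith [sq_nonneg ‖vh n - uh n‖, sq_nonneg ‖χh n - φh n‖]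
      exact ⟨by simpa [sub_eq_zero] using h5, by simpa [sub_eq_zero] using h6⟩
    have hall : ∀ n ≤ N, vh n = uh n := by
      intro n
      induction n with
      | zero => intro _; rw [hvh0, huh0]
      | succ n ih =>
        intro hn
        exact (key (n + 1) (by simp; omega) (ih (by omega))).1
    refine ⟨hall, fun n hn => (key n hn (hall _ ?_)).2⟩
    have := (Finset.mem_Icc.1 hn).2
    omega
  · intro tu tφ htu0 htmem
    let I : ℕ → ℝ := fun n => ∫ t in (((n : ℝ) - 1) * τ)..((n : ℝ) * τ),
      gap innL u u' φ τ n (tu (n - 1)) (tu n) (tφ n) t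
    have hI0 : ∀ n, 0 ≤ I n := fun n =>
      intervalIntegral.integral_nonneg (hlen n) fun t _ => gap_nonneg _ _ _ _ _ _ _ _ _
    let ρ : ℕ → ℝ := fun n => √(16 * M * I n / τ)
    have hρ : ∀ n, τ * ρ n ^ 2 = 16 * M * I n := fun n => by
      have := hI0 n
      rw [Real.sq_sqrt (by positivity)]
      field_simp
    let e : ℕ → H := fun n => uh n - tu n
    let η : ℕ → B := fun n => φh n - tφ n
    have he0 : e 0 = 0 := by simp [e, huh0, htu0]
    have hemem : ∀ n ≤ N, e n ∈ Hh := by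
      intro n hn
      rcases Nat.eq_zero_or_pos n with rfl | h
      · rw [he0]; exact Hh.zero_mem
      · have hm : n ∈ Finset.Icc 1 N := by simp; omega
        exact Hh.sub_mem (hmem n hm).1 (htmem n hm).1
    have hres : ∀ n ∈ Finset.Icc 1 N,
        (∀ v ∈ Hh, |innL (τ⁻¹ • (e n - e (n - 1))) v + d (e n) v - c (η n) v| ≤ ρ n * ‖v‖) ∧
        (∀ ψ ∈ Bh, |k (e n) ψ + b (η n) ψ| ≤ ρ n * ‖ψ‖) := by
      intro n hn
      have hs := hsub n hn
      have h := step_residual hCd hCtr hCk hCb hbd hd hc hk hb hτ (hF.mono hs) (hG.mono hs)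
        (huc.mono hs) (hu'.mono hs) (hφ.mono hs) (fun t ht => heq t (hs ht))
        (tu (n - 1)) (tu n) (tφ n) hM (Real.sqrt_nonneg _) (hρ n)
      constructor
      · intro v hv
        refine le_of_eq_of_le ?_ (h.1 v)
        rw [← (hsol n hn).1 v hv]
        congr 1
        simp only [e, η, map_sub, map_smul, LinearMap.sub_apply, LinearMap.smul_apply,
          smul_eq_mul]
        ring
      · intro ψ hψ
        refine le_of_eq_of_le ?_ (h.2 ψ)
        rw [← (hsol n hn).2 ψ hψ]
        congr 1
        simp only [e, η, map_sub, LinearMap.sub_apply]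
        ring
    have hgr : τ * ∑ n ∈ Finset.Icc 1 N, (‖e n‖ ^ 2 + ‖η n‖ ^ 2)
        ≤ C₁ * ∑ n ∈ Finset.Icc 1 N, I n := by
      rw [hC₁]
      refine gronwall hτ hτ4 hNτ hα (by positivity) (a := fun n => innL (e n) (e n))
        (fun n => hpos _) (by simp [he0]) (fun n => by positivity) (fun n _ => hI0 n) ?_
      intro n hn
      have h := step_energy hα hsymm hpos hgard hτ
        ((hres n hn).1 _ (hemem n (Finset.mem_Icc.1 hn).2))
        ((hres n hn).2 _ (Bh.sub_mem (hmem n hn).2 (htmem n hn).2))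
      rw [hρ n] at h
      linarith
    have hstep : ∀ n ∈ Finset.Icc 1 N,
        (∫ t in (((n : ℝ) - 1) * τ)..((n : ℝ) * τ),
          gap innL u u' φ τ n (uh (n - 1)) (uh n) (φh n) t)
        ≤ (2 + 96 * CP ^ 2 * M) * I n + 4 * (τ * ‖e (n - 1)‖ ^ 2)
          + (6 + 6 * CP ^ 2 * (Cd ^ 2 + Ctr ^ 2)) * (τ * (‖e n‖ ^ 2 + ‖η n‖ ^ 2)) := by
      intro n hn
      have hs := hsub n hn
      have hn' := Finset.mem_Icc.1 hn
      have hst := step_star hCd hCtr hCP (Real.sqrt_nonneg _) hsymm hbd hd hc hP hPo hPb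
        (hemem n hn'.2) (hemem (n - 1) (by omega)) (hres n hn).1
      have hi : ∀ x₀ x₁ y, IntervalIntegrable (gap innL u u' φ τ n x₀ x₁ y)
          MeasureTheory.volume (((n : ℝ) - 1) * τ) ((n : ℝ) * τ) := fun x₀ x₁ y =>
        (continuousOn_gap hbd (huc.mono hs) (hu'.mono hs) (hφ.mono hs)
          _ _ _ _ _).intervalIntegrable_of_Icc (hlen n)
      have h1 := intervalIntegral.integral_mono_on (hlen n)
        (hi (uh (n - 1)) (uh n) (φh n))
        (((hi (tu (n - 1)) (tu n) (tφ n)).const_mul 2).add intervalIntegrable_const)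
        fun t ht => gap_le hτ ht hbd u u' φ (tu (n - 1)) (tu n) (uh (n - 1)) (uh n)
          (tφ n) (φh n)
      rw [intervalIntegral.integral_add ((hi _ _ _).const_mul 2) intervalIntegrable_const,
        intervalIntegral.integral_const_mul, intervalIntegral.integral_const, smul_eq_mul,
        show (n : ℝ) * τ - ((n : ℝ) - 1) * τ = τ by ring] at h1
      refine h1.trans ?_
      have h2 := mul_le_mul_of_nonneg_left hst hτ.le
      have h3 : τ * (3 * CP ^ 2 * (ρ n ^ 2 + Cd ^ 2 * ‖e n‖ ^ 2 + Ctr ^ 2 * ‖η n‖ ^ 2))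
          = 3 * CP ^ 2 * (16 * M * I n + τ * (Cd ^ 2 * ‖e n‖ ^ 2 + Ctr ^ 2 * ‖η n‖ ^ 2)) := by
        rw [← hρ n]; ring
      rw [h3] at h2
      have h4 : 0 ≤ CP ^ 2 * τ * (Cd ^ 2 * ‖η n‖ ^ 2 + Ctr ^ 2 * ‖e n‖ ^ 2) := by positivity
      have h5 : 0 ≤ τ * ‖e n‖ ^ 2 := by positivity
      have h6 : 0 ≤ τ * ‖η n‖ ^ 2 := by positivity
      change 2 * I n + τ * (4 * (‖e (n - 1)‖ ^ 2 + ‖e n‖ ^ 2)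
        + 2 * starNorm innL (τ⁻¹ • (e n - e (n - 1))) ^ 2 + 2 * ‖η n‖ ^ 2) ≤ _
      linarith
    have hshift : ∀ m, ∑ n ∈ Finset.Icc 1 m, ‖e (n - 1)‖ ^ 2 + ‖e m‖ ^ 2
        = ∑ n ∈ Finset.Icc 1 m, ‖e n‖ ^ 2 := by
      intro m
      induction m with
      | zero => simp [he0]
      | succ m ih =>
        rw [Finset.sum_Icc_succ_top (by omega), Finset.sum_Icc_succ_top (by omega), ← ih]
        simp
    have hprev : ∑ n ∈ Finset.Icc 1 N, ‖e (n - 1)‖ ^ 2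
        ≤ ∑ n ∈ Finset.Icc 1 N, (‖e n‖ ^ 2 + ‖η n‖ ^ 2) := by
      have h1 : ∑ n ∈ Finset.Icc 1 N, ‖e n‖ ^ 2
          ≤ ∑ n ∈ Finset.Icc 1 N, (‖e n‖ ^ 2 + ‖η n‖ ^ 2) :=
        Finset.sum_le_sum fun n _ => le_add_of_nonneg_right (by positivity)
      linarith [hshift N, sq_nonneg ‖e N‖]
    have hfin := Finset.sum_le_sum hstep
    rw [Finset.sum_add_distrib, Finset.sum_add_distrib, ← Finset.mul_sum, ← Finset.mul_sum,
      ← Finset.mul_sum, ← Finset.mul_sum, ← Finset.mul_sum] at hfin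
    refine hfin.trans ?_
    change _ ≤ _ * ∑ n ∈ Finset.Icc 1 N, I n
    have h1 := mul_le_mul_of_nonneg_left hprev (by positivity : 0 ≤ 4 * τ)
    have h2 := mul_le_mul_of_nonneg_left hgr
      (by positivity : 0 ≤ 10 + 6 * CP ^ 2 * (Cd ^ 2 + Ctr ^ 2))
    linarith
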